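/- Let A be a Noetherian domain and M a finitely presented left A-module with presentation A^s →^{F_1} A^r → M → 0 and transposed module M^T = A^s/Im(F_1^T). Then M is reflexive (the natural map M → (M*)* is an isomorphism) if and only if Ext^i_A(M^T, A) = 0 for i = 1, 2. -/

import Mathlib

open CategoryTheory

/-- The right `A`-linear map `A^r → A^s` (on right modules, i.e. `Aᵐᵒᵖ`-modules) given by
the transpose of a matrix `F ∈ M_{r×s}(A)`: `c ↦ (∑ i, F i j * c i)_j`. -/
def transposeMap {A : Type*} [Ring A] {r s : ℕ} (F : Matrix (Fin r) (Fin s) A) :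
    (Fin r → A) →ₗ[Aᵐᵒᵖ] (Fin s → A) where
  toFun c := fun j => ∑ i, F i j * c i
  map_add' u v := by ext j; simp [mul_add, Finset.sum_add_distrib]
  map_smul' a c := by
    ext j
    simp [MulOpposite.smul_eq_mul_unop, Finset.sum_mul, mul_assoc]

/-- The canonical evaluation map from a left `A`-module `M` to its bidual
`(M*)* = Hom_{Aᵐᵒᵖ}(Hom_A(M, A), A)`. -/
def evalBidual {A : Type*} [Ring A] (M : Type*) [AddCommGroup M] [Module A M] (m : M) :
    (M →ₗ[A] A) →ₗ[Aᵐᵒᵖ] A where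
  toFun f := f m
  map_add' f g := rfl
  map_smul' a f := rfl

open Limits

theorem CategoryTheory.ProjectiveResolution.exists_extending {C : Type*} [Category* C] [Abelian C]
    [EnoughProjectives C] {X₁ X₀ Z : C} [Projective X₁] [Projective X₀]
    (d : X₁ ⟶ X₀) (p : X₀ ⟶ Z) [Epi p] (w : d ≫ p = 0)
    (h : (ShortComplex.mk d p w).Exact) :
    ∃ (P : ProjectiveResolution Z) (e₁ : P.complex.X 1 ≅ X₁) (e₀ : P.complex.X 0 ≅ X₀),
      P.complex.d 1 0 ≫ e₀.hom = e₁.hom ≫ d := by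
  let next {Y Y' : C} (f : Y' ⟶ Y) : Σ' (Y'' : C) (g : Y'' ⟶ Y'), g ≫ f = 0 :=
    ⟨_, Projective.d f, (Category.assoc ..).trans
      ((congrArg (Projective.π _ ≫ ·) (kernel.condition f)).trans comp_zero)⟩
  let K : ChainComplex C ℕ := ChainComplex.mk' X₀ X₁ d next
  have hd : K.d 1 0 = d := ChainComplex.mk'_d_1_0 ..
  have hK (n : ℕ) : K.ExactAt (n + 1) := by
    rw [HomologicalComplex.exactAt_iff' _ (n + 1 + 1) (n + 1) n (by simp) (by simp)]
    have hs := ChainComplex.mk'_d X₀ X₁ d next n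
    refine ShortComplex.exact_of_iso ?_ (exact_d_f (K.d (n + 1) n))
    exact ShortComplex.isoMk (ChainComplex.mk'XIso X₀ X₁ d next n).symm (Iso.refl _) (Iso.refl _)
      (by
        change (ChainComplex.mk'XIso X₀ X₁ d next n).inv ≫ K.d (n + 2) (n + 1) = _ ≫ 𝟙 _
        rw [hs, Iso.inv_hom_id_assoc]
        exact (Category.comp_id _).symm)
      ((Category.id_comp _).trans (Category.comp_id _).symm)
  have hproj (n : ℕ) : Projective (K.X n) := by
    obtain _ | _ | n := n
    · exact ‹Projective X₀›
    · exact ‹Projective X₁›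
    · exact Projective.of_iso (ChainComplex.mk'XIso X₀ X₁ d next n).symm
        (Projective.projective_over _)
  let q : K ⟶ (ChainComplex.single₀ C).obj Z :=
    (ChainComplex.toSingle₀Equiv K Z).symm ⟨p, by rw [hd]; exact w⟩
  have hqp : q.f 0 = p := ChainComplex.toSingle₀Equiv_symm_apply_f_zero _ _
  have hq : QuasiIso q := ⟨fun n => by
    cases n with
    | zero =>
      rw [ChainComplex.quasiIsoAt₀_iff, ShortComplex.quasiIso_iff_of_zeros' _ rfl rfl rfl]
      refine (ShortComplex.exact_and_epi_g_iff_of_iso ?_).2 ⟨h, ‹Epi p›⟩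
      exact ShortComplex.isoMk (Iso.refl _) (Iso.refl _) (Iso.refl _)
          ((Category.id_comp _).trans (hd.symm.trans (Category.comp_id _).symm))
          ((Category.id_comp _).trans (hqp.symm.trans (Category.comp_id _).symm))
    | succ n =>
      rw [quasiIsoAt_iff_exactAt']
      · exact hK n
      · apply ChainComplex.exactAt_succ_single_obj⟩
  exact ⟨{ complex := K, projective := hproj, π := q, quasiIso := hq }, Iso.refl _, Iso.refl _,
    (Category.comp_id _).trans (hd.trans (Category.id_comp _).symm)⟩

theorem CategoryTheory.ProjectiveResolution.subsingleton_ext_succ_iff {R : Type*} [Ring R] {C : Type*}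
    [Category* C] [Abelian C] [Linear R C] [EnoughProjectives C] {X : C}
    (P : ProjectiveResolution X) (Y : C) (n : ℕ) :
    Subsingleton (((Ext R C (n + 1)).obj (Opposite.op X)).obj Y) ↔
      ∀ f : P.complex.X (n + 1) ⟶ Y, P.complex.d (n + 2) (n + 1) ≫ f = 0 →
        ∃ g : P.complex.X n ⟶ Y, P.complex.d (n + 1) n ≫ g = f := by
  rw [← ModuleCat.isZero_iff_subsingleton, (P.isoExt (n + 1) Y).isZero_iff,
    ← HomologicalComplex.exactAt_iff_isZero_homology,
    HomologicalComplex.exactAt_iff' _ n (n + 1) (n + 2) (by simp) (by simp),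
    ShortComplex.moduleCat_exact_iff]
  rfl

theorem CategoryTheory.ProjectiveResolution.exists_epi_syzygy {C : Type*} [Category* C] [Abelian C] {X K : C}
    (P : ProjectiveResolution X) (i : K ⟶ P.complex.X 1) [Mono i]
    (w : i ≫ P.complex.d 1 0 = 0) (h : (ShortComplex.mk i (P.complex.d 1 0) w).Exact) :
    ∃ q : P.complex.X 2 ⟶ K, Epi q ∧ q ≫ i = P.complex.d 2 1 ∧
      P.complex.d 3 2 ≫ q = 0 ∧
      ∀ {Y : C} (f : P.complex.X 2 ⟶ Y), P.complex.d 3 2 ≫ f = 0 → ∃ g : K ⟶ Y, q ≫ g = f := by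
  have : Mono (ShortComplex.mk i (P.complex.d 1 0) w).f := ‹Mono i›
  let q : P.complex.X 2 ⟶ K := h.lift (P.complex.d 2 1) (P.complex.d_comp_d 2 1 0)
  have hq : q ≫ i = P.complex.d 2 1 := h.lift_f _ _
  have hepi : Epi q := by
    rw [epi_iff_surjective_up_to_refinements]
    intro T y
    obtain ⟨T', t, ht, x, hx⟩ := (P.exact_succ 0).exact_up_to_refinements (y ≫ i)
      ((Category.assoc ..).trans (by rw [w, comp_zero]))
    refine ⟨T', t, ht, x, ?_⟩
    rw [← cancel_mono i, Category.assoc, Category.assoc, hq]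
    exact hx
  have hw : P.complex.d 3 2 ≫ q = 0 := by
    rw [← cancel_mono i, Category.assoc, hq, P.complex.d_comp_d, zero_comp]
  have hex : (ShortComplex.mk _ _ hw).Exact := by
    let α : ShortComplex.mk _ _ hw ⟶ ShortComplex.mk _ _ (P.complex.d_comp_d 3 2 1) :=
      { τ₁ := 𝟙 _
        τ₂ := 𝟙 _
        τ₃ := i
        comm₁₂ := (Category.id_comp _).trans (Category.comp_id _).symm
        comm₂₃ := (Category.id_comp _).trans hq.symm }
    have : Epi α.τ₁ := inferInstanceAs (Epi (𝟙 _))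
    have : IsIso α.τ₂ := inferInstanceAs (IsIso (𝟙 _))
    have : Mono α.τ₃ := ‹Mono i›
    exact (ShortComplex.exact_iff_of_epi_of_isIso_of_mono α).2 (P.exact_succ 1)
  have : Epi (ShortComplex.mk _ _ hw).g := hepi
  exact ⟨q, hepi, hq, hw, fun f hf => ⟨hex.desc f hf, hex.g_desc f hf⟩⟩

theorem subsingleton_ext_one_and_two_iff {R : Type*} [Ring R] {C : Type*} [Category* C]
    [Abelian C] [Linear R C] [EnoughProjectives C] {K X₁ X₀ Z : C} [Projective X₁] [Projective X₀]
    {i : K ⟶ X₁} {d : X₁ ⟶ X₀} {p : X₀ ⟶ Z} [Mono i] [Epi p] {w' : i ≫ d = 0} {w : d ≫ p = 0}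
    (h' : (ShortComplex.mk i d w').Exact) (h : (ShortComplex.mk d p w).Exact) (Y : C) :
    (Subsingleton (((Ext R C 1).obj (Opposite.op Z)).obj Y) ↔
      ∀ f : X₁ ⟶ Y, i ≫ f = 0 → ∃ g : X₀ ⟶ Y, d ≫ g = f) ∧
    (Subsingleton (((Ext R C 2).obj (Opposite.op Z)).obj Y) ↔
      ∀ f : K ⟶ Y, ∃ g : X₁ ⟶ Y, i ≫ g = f) := by
  obtain ⟨P, e₁, e₀, he⟩ := ProjectiveResolution.exists_extending d p w h
  have hd : P.complex.d 1 0 = e₁.hom ≫ d ≫ e₀.inv := by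
    rw [← Category.assoc, ← he, Category.assoc, e₀.hom_inv_id, Category.comp_id]
  have hwP : (i ≫ e₁.inv) ≫ P.complex.d 1 0 = 0 := by
    rw [hd, Category.assoc, e₁.inv_hom_id_assoc, ← Category.assoc, w', zero_comp]
  have hexP : (ShortComplex.mk _ _ hwP).Exact := by
    refine ShortComplex.exact_of_iso ?_ h'
    refine ShortComplex.isoMk (Iso.refl _) e₁.symm e₀.symm (Category.id_comp _) ?_
    change e₁.inv ≫ P.complex.d 1 0 = d ≫ e₀.inv
    rw [hd, e₁.inv_hom_id_assoc]
  obtain ⟨q, hq, hqd, hdq, hfac⟩ := P.exists_epi_syzygy (i ≫ e₁.inv) hwP hexP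
  rw [P.subsingleton_ext_succ_iff, P.subsingleton_ext_succ_iff]
  constructor
  · constructor
    · intro H f hf
      obtain ⟨g, hg⟩ := H (e₁.hom ≫ f) (by
        rw [← hqd, Category.assoc, Category.assoc, e₁.inv_hom_id_assoc, hf, comp_zero])
      refine ⟨e₀.inv ≫ g, ?_⟩
      rw [← cancel_epi e₁.hom, ← hg, hd, Category.assoc, Category.assoc]
    · intro H f hf
      rw [← hqd, Category.assoc, ← comp_zero (f := q), cancel_epi, Category.assoc] at hf
      obtain ⟨g, hg⟩ := H _ hf
      refine ⟨e₀.hom ≫ g, ?_⟩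
      rw [hd, Category.assoc, Category.assoc, e₀.inv_hom_id_assoc, hg, e₁.hom_inv_id_assoc]
  · constructor
    · intro H f
      obtain ⟨g, hg⟩ := H (q ≫ f) (by
        rw [← Category.assoc, hdq, zero_comp])
      refine ⟨e₁.inv ≫ g, ?_⟩
      rwa [← hqd, Category.assoc, cancel_epi, Category.assoc] at hg
    · intro H f hf
      obtain ⟨k, rfl⟩ := hfac f hf
      obtain ⟨g, rfl⟩ := H k
      refine ⟨e₁.hom ≫ g, ?_⟩
      rw [← hqd, Category.assoc, Category.assoc, e₁.inv_hom_id_assoc]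

theorem LinearMap.apply_eq_dotProduct_mulOpposite {A : Type*} [Ring A] {n : Type*} [Fintype n]
    [DecidableEq n] (φ : (n → A) →ₗ[Aᵐᵒᵖ] A) (x : n → A) :
    φ x = (fun i => φ (Pi.single i 1)) ⬝ᵥ x := by
  conv_lhs => rw [pi_eq_sum_univ' x]
  simp only [dotProduct, map_sum]
  refine Finset.sum_congr rfl fun i _ => ?_
  rw [show x i • Pi.single i (1 : A) = MulOpposite.op (x i) • Pi.single i (1 : A) by
    ext j; simp [Pi.single_apply], map_smul, op_smul_eq_mul]

theorem LinearMap.apply_eq_dotProduct {A : Type*} [Ring A] {n : Type*} [Fintype n]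
    [DecidableEq n] (φ : (n → A) →ₗ[A] A) (c : n → A) :
    φ c = c ⬝ᵥ fun i => φ (Pi.single i 1) := by
  rw [LinearMap.pi_apply_eq_sum_univ φ c]
  refine Finset.sum_congr rfl fun i _ => ?_
  congr 2
  ext j
  simp [Pi.single_apply, eq_comm]

/-- The right linear functional `x ↦ ∑ i, c i * x i` given by a row vector `c`. -/
def dotProductRight {A : Type*} [Ring A] {n : Type*} [Fintype n] (c : n → A) :
    (n → A) →ₗ[Aᵐᵒᵖ] A where
  toFun x := c ⬝ᵥ x
  map_add' x y := dotProduct_add c x y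
  map_smul' a x := dotProduct_smul a c x

/-- The left linear functional `c ↦ ∑ i, c i * x i` given by a column vector `x`. -/
def dotProductLeft {A : Type*} [Ring A] {n : Type*} [Fintype n] (x : n → A) :
    (n → A) →ₗ[A] A where
  toFun c := c ⬝ᵥ x
  map_add' c c' := add_dotProduct c c' x
  map_smul' a c := smul_dotProduct a c x

section Presentation

variable {A : Type*} [Ring A] {M : Type*} [AddCommGroup M] [Module A M] {s r : ℕ}
  {F : Matrix (Fin r) (Fin s) A} {f : (Fin s → A) →ₗ[A] (Fin r → A)}
  {π : (Fin r → A) →ₗ[A] M}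

theorem dotProduct_transposeMap (hf : ∀ c i, f c i = ∑ j, c j * F i j) (c : Fin s → A)
    (x : Fin r → A) : c ⬝ᵥ transposeMap F x = f c ⬝ᵥ x := by
  simp only [transposeMap, LinearMap.coe_mk, AddHom.coe_mk, dotProduct, hf, Finset.mul_sum,
    Finset.sum_mul, mul_assoc]
  exact Finset.sum_comm

theorem mem_ker_transposeMap_iff (hf : ∀ c i, f c i = ∑ j, c j * F i j) (x : Fin r → A) :
    x ∈ LinearMap.ker (transposeMap F) ↔ ∀ c, f c ⬝ᵥ x = 0 := by
  simp only [LinearMap.mem_ker, ← dotProduct_transposeMap hf]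
  refine ⟨fun h c => by rw [h, dotProduct_zero], fun h => ?_⟩
  ext j
  simpa using h (Pi.single j 1)

/-- The coordinates of a functional on a presented module. -/
def dualToKer (hf : ∀ c i, f c i = ∑ j, c j * F i j)
    (hexact : LinearMap.ker π = LinearMap.range f) :
    (M →ₗ[A] A) →ₗ[Aᵐᵒᵖ] LinearMap.ker (transposeMap F) where
  toFun g := ⟨fun i => g (π (Pi.single i 1)), (mem_ker_transposeMap_iff hf _).2 fun c => by
    have h : π (f c) = 0 := LinearMap.mem_ker.1 (hexact ▸ LinearMap.mem_range_self f c)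
    exact (LinearMap.apply_eq_dotProduct (g ∘ₗ π) (f c)).symm.trans
      ((congrArg g h).trans g.map_zero)⟩
  map_add' _ _ := rfl
  map_smul' _ _ := rfl

theorem apply_eq_dotProduct_dualToKer (hf : ∀ c i, f c i = ∑ j, c j * F i j)
    (hexact : LinearMap.ker π = LinearMap.range f) (g : M →ₗ[A] A) (c : Fin r → A) :
    g (π c) = c ⬝ᵥ (dualToKer hf hexact g : Fin r → A) :=
  LinearMap.apply_eq_dotProduct (g ∘ₗ π) c

theorem dualToKer_bijective (hf : ∀ c i, f c i = ∑ j, c j * F i j)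
    (hexact : LinearMap.ker π = LinearMap.range f) (hπ : Function.Surjective π) :
    Function.Bijective (dualToKer hf hexact) := by
  constructor
  · intro g g' h
    ext m
    obtain ⟨c, rfl⟩ := hπ m
    rw [apply_eq_dotProduct_dualToKer hf hexact, apply_eq_dotProduct_dualToKer hf hexact, h]
  · intro x
    have hx : LinearMap.ker π ≤ LinearMap.ker (dotProductLeft (x : Fin r → A)) := by
      rw [hexact]
      rintro _ ⟨c, rfl⟩
      exact (mem_ker_transposeMap_iff hf _).1 x.2 c
    refine ⟨(LinearMap.ker π).liftQ _ hx ∘ₗ (π.quotKerEquivOfSurjective hπ).symm.toLinearMap, ?_⟩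
    ext i
    have : (π.quotKerEquivOfSurjective hπ).symm (π (Pi.single i 1)) =
        (LinearMap.ker π).mkQ (Pi.single i 1) :=
      (LinearEquiv.symm_apply_eq _).2 rfl
    change (LinearMap.ker π).liftQ _ hx ((π.quotKerEquivOfSurjective hπ).symm _) = _
    rw [this]
    exact single_one_dotProduct i _

theorem evalBidual_injective_iff (hf : ∀ c i, f c i = ∑ j, c j * F i j)
    (hexact : LinearMap.ker π = LinearMap.range f) (hπ : Function.Surjective π) :
    Function.Injective (evalBidual (A := A) M) ↔
      ∀ φ : (Fin r → A) →ₗ[Aᵐᵒᵖ] A, (∀ x ∈ LinearMap.ker (transposeMap F), φ x = 0) →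
        ∃ ψ : (Fin s → A) →ₗ[Aᵐᵒᵖ] A, ψ ∘ₗ transposeMap F = φ := by
  constructor
  · intro H φ hφ
    set c : Fin r → A := fun i => φ (Pi.single i 1) with hc
    have h0 : π c = 0 := by
      refine H (LinearMap.ext fun g => ?_)
      change g (π c) = g 0
      rw [apply_eq_dotProduct_dualToKer hf hexact, hc,
        ← LinearMap.apply_eq_dotProduct_mulOpposite, hφ _ (dualToKer hf hexact g).2, map_zero]
    obtain ⟨a, ha⟩ : c ∈ LinearMap.range f := hexact ▸ LinearMap.mem_ker.2 h0
    refine ⟨dotProductRight a, LinearMap.ext fun x => ?_⟩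
    change a ⬝ᵥ transposeMap F x = φ x
    rw [dotProduct_transposeMap hf, ha, hc, ← LinearMap.apply_eq_dotProduct_mulOpposite]
  · intro H m m' hm
    obtain ⟨c, hc⟩ := hπ (m - m')
    obtain ⟨ψ, hψ⟩ := H (dotProductRight c) fun x hx => by
      obtain ⟨g, hg⟩ := (dualToKer_bijective hf hexact hπ).2 ⟨x, hx⟩
      change c ⬝ᵥ x = 0
      have := apply_eq_dotProduct_dualToKer hf hexact g c
      rw [hg, hc, map_sub] at this
      rw [← this, sub_eq_zero]
      exact LinearMap.congr_fun hm g
    have hmem : c ∈ LinearMap.range f := by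
      refine ⟨fun j => ψ (Pi.single j 1), funext fun i => ?_⟩
      have h := LinearMap.congr_fun hψ (Pi.single i 1)
      rw [LinearMap.comp_apply, LinearMap.apply_eq_dotProduct_mulOpposite ψ,
        dotProduct_transposeMap hf] at h
      rw [← dotProduct_single_one (f _) i, h]
      exact dotProduct_single_one c i
    rw [← hexact, LinearMap.mem_ker, hc] at hmem
    exact sub_eq_zero.1 hmem

theorem evalBidual_surjective_iff (hf : ∀ c i, f c i = ∑ j, c j * F i j)
    (hexact : LinearMap.ker π = LinearMap.range f) (hπ : Function.Surjective π) :
    Function.Surjective (evalBidual (A := A) M) ↔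
      ∀ φ : LinearMap.ker (transposeMap F) →ₗ[Aᵐᵒᵖ] A,
        ∃ ψ : (Fin r → A) →ₗ[Aᵐᵒᵖ] A, ψ ∘ₗ (LinearMap.ker (transposeMap F)).subtype = φ := by
  constructor
  · intro H φ
    obtain ⟨m, hm⟩ := H (φ ∘ₗ dualToKer hf hexact)
    obtain ⟨c, rfl⟩ := hπ m
    refine ⟨dotProductRight c, LinearMap.ext fun x => ?_⟩
    obtain ⟨g, rfl⟩ := (dualToKer_bijective hf hexact hπ).2 x
    exact (apply_eq_dotProduct_dualToKer hf hexact g c).symm.trans (LinearMap.congr_fun hm g)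
  · intro H Φ
    let e := LinearEquiv.ofBijective _ (dualToKer_bijective hf hexact hπ)
    obtain ⟨ψ, hψ⟩ := H (Φ ∘ₗ e.symm.toLinearMap)
    refine ⟨π fun i => ψ (Pi.single i 1), LinearMap.ext fun g => ?_⟩
    have h := LinearMap.congr_fun hψ (e g)
    rw [LinearMap.comp_apply, LinearMap.apply_eq_dotProduct_mulOpposite ψ, LinearMap.comp_apply,
      LinearEquiv.coe_coe, e.symm_apply_apply] at h
    exact (apply_eq_dotProduct_dualToKer hf hexact g _).trans h

end Presentation

instance MulOpposite.moduleFree {A : Type*} [Ring A] : Module.Free Aᵐᵒᵖ A :=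
  Module.Free.of_equiv (MulOpposite.opLinearEquiv Aᵐᵒᵖ).symm

/-- Let `A` be a (left and right) Noetherian domain and `M` a finitely
presented left `A`-module with presentation `A^s →^{F₁} A^r → M → 0` (the map `f₁` having
matrix `F₁`) and transposed right module `M^T = A^s/Im(F₁^T)`.  Then `M` is reflexive
(the natural evaluation map `M → (M*)*` is an isomorphism, i.e. bijective) if and only if
`Ext^i_A(M^T, A) = 0` for `i = 1, 2` (Ext over right `A`-modules, i.e. `Aᵐᵒᵖ`-modules). -/
theorem reflexive_iff_ext_of_transpose_vanish {A : Type} [Ring A] [IsDomain A]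
    [IsNoetherianRing A] [IsNoetherianRing Aᵐᵒᵖ]
    (M : Type) [AddCommGroup M] [Module A M]
    {s r : ℕ} (F₁ : Matrix (Fin r) (Fin s) A)
    (f₁ : (Fin s → A) →ₗ[A] (Fin r → A))
    (hf₁ : ∀ c i, f₁ c i = ∑ j, c j * F₁ i j)
    (π : (Fin r → A) →ₗ[A] M) (hπ : Function.Surjective π)
    (hexact : LinearMap.ker π = LinearMap.range f₁) :
    Function.Bijective (evalBidual (A := A) M) ↔
      (∀ i : ℕ, i = 1 ∨ i = 2 →
        Subsingleton (((Ext ℤ (ModuleCat Aᵐᵒᵖ) i).obj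
          (Opposite.op (ModuleCat.of Aᵐᵒᵖ
            ((Fin s → A) ⧸ LinearMap.range (transposeMap F₁))))).obj
          (ModuleCat.of Aᵐᵒᵖ A))) := by
  let d := ModuleCat.ofHom (transposeMap F₁)
  let i := ModuleCat.ofHom (LinearMap.ker (transposeMap F₁)).subtype
  let p := ModuleCat.ofHom (LinearMap.range (transposeMap F₁)).mkQ
  have : Mono i := (ModuleCat.mono_iff_injective i).2 (Submodule.subtype_injective _)
  have : Epi p := (ModuleCat.epi_iff_surjective p).2 (Submodule.mkQ_surjective _)
  have w' : i ≫ d = 0 := by ext x; exact congrFun x.2 _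
  have w : d ≫ p = 0 := by
    ext x
    exact (Submodule.Quotient.mk_eq_zero _).2 (LinearMap.mem_range_self _ _)
  have h' : (ShortComplex.mk i d w').Exact :=
    (ShortComplex.ShortExact.moduleCat_exact_iff_function_exact _).2
      (LinearMap.exact_subtype_ker_map (transposeMap F₁))
  have h : (ShortComplex.mk d p w).Exact :=
    (ShortComplex.ShortExact.moduleCat_exact_iff_function_exact _).2
      (LinearMap.exact_map_mkQ_range (transposeMap F₁))
  obtain ⟨h₁, h₂⟩ := subsingleton_ext_one_and_two_iff (R := ℤ) h' h (ModuleCat.of Aᵐᵒᵖ A)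
  simp only [forall_eq_or_imp, forall_eq]
  refine and_congr ?_ ?_
  · rw [h₁, evalBidual_injective_iff hf₁ hexact hπ]
    constructor
    · intro H φ hφ
      obtain ⟨ψ, hψ⟩ := H φ.hom fun x hx =>
        LinearMap.congr_fun (congrArg ModuleCat.Hom.hom hφ) ⟨x, hx⟩
      exact ⟨ModuleCat.ofHom ψ, ModuleCat.hom_ext hψ⟩
    · intro H φ hφ
      obtain ⟨ψ, hψ⟩ := H (ModuleCat.ofHom φ)
        (ModuleCat.hom_ext (LinearMap.ext fun x => hφ x.1 x.2))
      exact ⟨ψ.hom, congrArg ModuleCat.Hom.hom hψ⟩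
  · rw [h₂, evalBidual_surjective_iff hf₁ hexact hπ]
    constructor
    · intro H φ
      obtain ⟨ψ, hψ⟩ := H φ.hom
      exact ⟨ModuleCat.ofHom ψ, ModuleCat.hom_ext hψ⟩
    · intro H φ
      obtain ⟨ψ, hψ⟩ := H (ModuleCat.ofHom φ)
      exact ⟨ψ.hom, congrArg ModuleCat.Hom.hom hψ⟩
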